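/- Assume M = Q and X̄₀^red ∈ ℝ^{Q×Q} is invertible. Set Δ₁^rel := (X̄₀^red)⁻¹ΔX₀ and Δ₂^rel := Δ₁^rel·𝒩⁻¹·(Δ₁^rel)ᵀ ∈ ℝ^{Q×Q} (a positive semidefinite symmetric matrix, so 1 + Δ₂^rel is invertible). Then ‖Y^ext·𝒫^⊥‖²_{L²_𝒩} = Tr( Y·Δ₂^rel·(1 + Δ₂^rel)⁻¹·Yᵀ ). -/

import Mathlib

/-! Let `E = Yext 1` be the class-indicator matrix, `W = 𝒩⁻¹`, `D = Δ₁^rel`, `A = X̄₀^red`.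
Then `Y^ext = Y E` and `X₀ = A Z` with `Z = E + D`. The rows of `E` are orthonormal for `W`
(`indicator_mul_weight_mul_transpose`) and orthogonal to those of `D`, since deviations sum to zero
in each class (`Del1_mul_weight_mul_indicator`). Hence `Z W Zᵀ = 1 + Δ₂^rel =: S`, the factor `A`
cancels from the projector, `𝒫 = W Zᵀ S⁻¹ Z`, and `E 𝒫 = S⁻¹ Z`. Expanding,
`(E - S⁻¹ Z) W (E - S⁻¹ Z)ᵀ = 1 - S⁻¹ = Δ₂^rel S⁻¹`. -/

open Matrix

noncomputable section

/-- Index type for training inputs: class `j ∈ {1,…,Q}` and sample `i ∈ {1,…,N_j}`. -/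
abbrev Idx (Q : ℕ) (Nc : Fin Q → ℕ) : Type := (j : Fin Q) × Fin (Nc j)

/-- The matrix `X̄₀^red ∈ ℝ^{M×Q}` of class means `x̄_{0,j} = (1/N_j)·Σ_i x_{0,j,i}`. -/
def classMeans {Q M : ℕ} (Nc : Fin Q → ℕ) (X : Matrix (Fin M) (Idx Q Nc) ℝ) :
    Matrix (Fin M) (Fin Q) ℝ :=
  Matrix.of fun m j => (Nc j : ℝ)⁻¹ * ∑ i : Fin (Nc j), X m ⟨j, i⟩

/-- The matrix `X̄₀ ∈ ℝ^{M×N}` with column `x̄_{0,j}` at each position of class `j`. -/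
def barX {Q M : ℕ} (Nc : Fin Q → ℕ) (X : Matrix (Fin M) (Idx Q Nc) ℝ) :
    Matrix (Fin M) (Idx Q Nc) ℝ :=
  Matrix.of fun m p => classMeans Nc X m p.1

/-- The deviation matrix `ΔX₀ := X₀ − X̄₀`. -/
def deltaX {Q M : ℕ} (Nc : Fin Q → ℕ) (X : Matrix (Fin M) (Idx Q Nc) ℝ) :
    Matrix (Fin M) (Idx Q Nc) ℝ := X - barX Nc X

/-- The block-diagonal weight matrix `𝒩 = diag(N_j·1_{N_j×N_j})`. -/
def calN (Q : ℕ) (Nc : Fin Q → ℕ) : Matrix (Idx Q Nc) (Idx Q Nc) ℝ :=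
  Matrix.diagonal fun p => (Nc p.1 : ℝ)

/-- The extended target matrix `Y^ext ∈ ℝ^{Q×N}`: column `y_j` at each position of class `j`. -/
def Yext {Q : ℕ} (Nc : Fin Q → ℕ) (Y : Matrix (Fin Q) (Fin Q) ℝ) :
    Matrix (Fin Q) (Idx Q Nc) ℝ :=
  Matrix.of fun q p => Y q p.1

/-- Entrywise ReLU on matrices: `σ(A)_{kl} = max(0, A_{kl})`. -/
def relu {m n : Type*} (A : Matrix m n ℝ) : Matrix m n ℝ :=
  Matrix.of fun i j => max 0 (A i j)

/-- Euclidean norm of a vector in `ℝ^k`. -/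
def enorm {k : ℕ} (v : Fin k → ℝ) : ℝ := Real.sqrt (∑ i, (v i) ^ 2)

/-- Frobenius (Hilbert–Schmidt) norm `‖B‖_F = √Tr(BBᵀ)`. -/
def frob {m n : Type*} [Fintype m] [Fintype n] (A : Matrix m n ℝ) : ℝ :=
  Real.sqrt (Matrix.trace (A * Aᵀ))

/-- The replicated-bias matrix `b·u_Nᵀ ∈ ℝ^{M×N}`. -/
def colRep {Q M : ℕ} (Nc : Fin Q → ℕ) (b : Fin M → ℝ) : Matrix (Fin M) (Idx Q Nc) ℝ :=
  Matrix.of fun m _ => b m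

/-- The weighted `L²_𝒩` norm `‖A‖ = √Tr(A𝒩⁻¹Aᵀ)`. -/
def l2N {Q M : ℕ} (Nc : Fin Q → ℕ) (A : Matrix (Fin M) (Idx Q Nc) ℝ) : ℝ :=
  Real.sqrt (Matrix.trace (A * (calN Q Nc)⁻¹ * Aᵀ))

/-- `ℓ²→ℓ²` operator norm of a matrix. -/
def opNorm {m n : ℕ} (A : Matrix (Fin m) (Fin n) ℝ) : ℝ :=
  ‖LinearMap.toContinuousLinearMap (Matrix.toEuclideanLin A)‖

/-- `Δ₁^rel := (X̄₀^red)⁻¹ · ΔX₀`. -/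
def Del1 {Q : ℕ} (Nc : Fin Q → ℕ) (X₀ : Matrix (Fin Q) (Idx Q Nc) ℝ) :
    Matrix (Fin Q) (Idx Q Nc) ℝ :=
  (classMeans Nc X₀)⁻¹ * deltaX Nc X₀

/-- `Δ₂^rel := Δ₁^rel · 𝒩⁻¹ · (Δ₁^rel)ᵀ`. -/
def Del2 {Q : ℕ} (Nc : Fin Q → ℕ) (X₀ : Matrix (Fin Q) (Idx Q Nc) ℝ) :
    Matrix (Fin Q) (Fin Q) ℝ :=
  Del1 Nc X₀ * (calN Q Nc)⁻¹ * (Del1 Nc X₀)ᵀ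

/-- The projector `𝒫 := 𝒩⁻¹X₀ᵀ(X₀𝒩⁻¹X₀ᵀ)⁻¹X₀`. -/
def Pmat {Q M : ℕ} (Nc : Fin Q → ℕ) (X₀ : Matrix (Fin M) (Idx Q Nc) ℝ) :
    Matrix (Idx Q Nc) (Idx Q Nc) ℝ :=
  (calN Q Nc)⁻¹ * X₀ᵀ * (X₀ * (calN Q Nc)⁻¹ * X₀ᵀ)⁻¹ * X₀

lemma calN_inv {Q : ℕ} (Nc : Fin Q → ℕ) (hNc : ∀ j, 0 < Nc j) :
    (calN Q Nc)⁻¹ = Matrix.diagonal fun p : Idx Q Nc => (Nc p.1 : ℝ)⁻¹ := by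
  apply Matrix.inv_eq_right_inv
  rw [calN, Matrix.diagonal_mul_diagonal, ← Matrix.diagonal_one]
  congr 1
  funext p
  have : (Nc p.1 : ℝ) ≠ 0 := by exact_mod_cast (hNc p.1).ne'
  exact mul_inv_cancel₀ this

lemma Yext_eq_mul {Q : ℕ} (Nc : Fin Q → ℕ) (Y : Matrix (Fin Q) (Fin Q) ℝ) :
    Yext Nc Y = Y * Yext Nc 1 := by
  ext q p
  simp [Yext, Matrix.mul_apply, Matrix.one_apply]

/-- Multiplying by `𝒩⁻¹Eᵀ`, with `E` the class-indicator matrix, averages over each class. -/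
lemma mul_weight_mul_indicator {Q M : ℕ} (Nc : Fin Q → ℕ) (hNc : ∀ j, 0 < Nc j)
    (X : Matrix (Fin M) (Idx Q Nc) ℝ) :
    X * (calN Q Nc)⁻¹ * (Yext Nc 1)ᵀ = classMeans Nc X := by
  rw [calN_inv Nc hNc]
  ext m j
  rw [Matrix.mul_apply, Fintype.sum_sigma, Finset.sum_eq_single j]
  · simp [Yext, classMeans, Finset.mul_sum, mul_comm]
  · intro b _ hb
    simp [Yext, Matrix.one_apply, hb.symm]
  · simp

lemma classMeans_Yext {Q : ℕ} (Nc : Fin Q → ℕ) (hNc : ∀ j, 0 < Nc j)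
    (Y : Matrix (Fin Q) (Fin Q) ℝ) : classMeans Nc (Yext Nc Y) = Y := by
  ext m j
  have : (Nc j : ℝ) ≠ 0 := by exact_mod_cast (hNc j).ne'
  simp [classMeans, Yext, this]

lemma indicator_mul_weight_mul_transpose {Q : ℕ} (Nc : Fin Q → ℕ) (hNc : ∀ j, 0 < Nc j) :
    Yext Nc 1 * (calN Q Nc)⁻¹ * (Yext Nc 1)ᵀ = 1 := by
  rw [mul_weight_mul_indicator Nc hNc, classMeans_Yext Nc hNc]

lemma Del1_mul_weight_mul_indicator {Q : ℕ} (Nc : Fin Q → ℕ) (hNc : ∀ j, 0 < Nc j)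
    (X₀ : Matrix (Fin Q) (Idx Q Nc) ℝ) :
    Del1 Nc X₀ * (calN Q Nc)⁻¹ * (Yext Nc 1)ᵀ = 0 := by
  have hbar : barX Nc X₀ = Yext Nc (classMeans Nc X₀) := rfl
  have h : deltaX Nc X₀ * (calN Q Nc)⁻¹ * (Yext Nc 1)ᵀ = 0 := by
    rw [deltaX, Matrix.sub_mul, Matrix.sub_mul, mul_weight_mul_indicator Nc hNc,
      mul_weight_mul_indicator Nc hNc, hbar, classMeans_Yext Nc hNc, sub_self]
  rw [Del1, Matrix.mul_assoc, Matrix.mul_assoc, ← Matrix.mul_assoc (deltaX Nc X₀), h,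
    Matrix.mul_zero]

lemma eq_classMeans_mul {Q : ℕ} (Nc : Fin Q → ℕ) (X₀ : Matrix (Fin Q) (Idx Q Nc) ℝ)
    (hred : IsUnit (classMeans Nc X₀)) :
    X₀ = classMeans Nc X₀ * (Yext Nc 1 + Del1 Nc X₀) := by
  have hbar : barX Nc X₀ = Yext Nc (classMeans Nc X₀) := rfl
  rw [Matrix.mul_add, ← Yext_eq_mul, Del1,
    Matrix.mul_nonsing_inv_cancel_left _ _ ((Matrix.isUnit_iff_isUnit_det _).1 hred), deltaX, hbar]
  abel

lemma calN_inv_posSemidef {Q : ℕ} (Nc : Fin Q → ℕ) (hNc : ∀ j, 0 < Nc j) :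
    ((calN Q Nc)⁻¹).PosSemidef := by
  rw [calN_inv Nc hNc]
  exact Matrix.PosSemidef.diagonal fun p => by positivity

lemma mul_weight_mul_transpose_posSemidef {Q M : ℕ} (Nc : Fin Q → ℕ) (hNc : ∀ j, 0 < Nc j)
    (B : Matrix (Fin M) (Idx Q Nc) ℝ) : (B * (calN Q Nc)⁻¹ * Bᵀ).PosSemidef := by
  have := (calN_inv_posSemidef Nc hNc).mul_mul_conjTranspose_same B
  rwa [Matrix.conjTranspose_eq_transpose_of_trivial] at this

/-- For `M = Q` with `X̄₀^red` invertible,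
`‖Y^ext𝒫^⊥‖²_{L²_𝒩} = Tr(Y·Δ₂^rel·(1 + Δ₂^rel)⁻¹·Yᵀ)`. -/
theorem statement12 {Q : ℕ} (Nc : Fin Q → ℕ) (hNc : ∀ j, 0 < Nc j)
    (X₀ : Matrix (Fin Q) (Idx Q Nc) ℝ)
    (hred : IsUnit (classMeans Nc X₀))
    (Y : Matrix (Fin Q) (Fin Q) ℝ) :
    (l2N Nc (Yext Nc Y * (1 - Pmat Nc X₀))) ^ 2 =
      Matrix.trace (Y * Del2 Nc X₀ * (1 + Del2 Nc X₀)⁻¹ * Yᵀ) := by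
  have hEE := indicator_mul_weight_mul_transpose Nc hNc
  have hDE := Del1_mul_weight_mul_indicator Nc hNc X₀
  have hX := eq_classMeans_mul Nc X₀ hred
  have hA := (Matrix.isUnit_iff_isUnit_det _).1 hred
  have hAt : IsUnit ((classMeans Nc X₀)ᵀ).det := by rwa [Matrix.det_transpose]
  have hWt : ((calN Q Nc)⁻¹)ᵀ = (calN Q Nc)⁻¹ := by
    rw [calN_inv Nc hNc, Matrix.diagonal_transpose]
  have hpsd : (Del2 Nc X₀).PosSemidef := mul_weight_mul_transpose_posSemidef Nc hNc _
  have hpd : (1 + Del2 Nc X₀).PosDef := Matrix.PosDef.one.add_posSemidef hpsd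
  have hS : IsUnit (1 + Del2 Nc X₀).det := (Matrix.isUnit_iff_isUnit_det _).1 hpd.isUnit
  have hSt : ((1 + Del2 Nc X₀)⁻¹)ᵀ = (1 + Del2 Nc X₀)⁻¹ := by
    have := hpd.isHermitian.inv.eq
    rwa [Matrix.conjTranspose_eq_transpose_of_trivial] at this
  have hDel2 : Del1 Nc X₀ * (calN Q Nc)⁻¹ * (Del1 Nc X₀)ᵀ = Del2 Nc X₀ := rfl
  have hP : Pmat Nc X₀ = (calN Q Nc)⁻¹ * X₀ᵀ * (X₀ * (calN Q Nc)⁻¹ * X₀ᵀ)⁻¹ * X₀ := rfl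
  rw [l2N, Real.sq_sqrt (mul_weight_mul_transpose_posSemidef Nc hNc _).trace_nonneg,
    Yext_eq_mul Nc Y]
  generalize classMeans Nc X₀ = A at *
  generalize Del1 Nc X₀ = D at *
  generalize Yext Nc 1 = E at *
  generalize (calN Q Nc)⁻¹ = W at *
  generalize Del2 Nc X₀ = Δ at *
  generalize Pmat Nc X₀ = P at *
  have hED : E * W * Dᵀ = 0 := by
    have := congrArg Matrix.transpose hDE
    simpa [Matrix.transpose_mul, hWt, Matrix.mul_assoc] using this
  obtain ⟨Z, hZ⟩ : ∃ Z, Z = E + D := ⟨_, rfl⟩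
  have hEZ : E * W * Zᵀ = 1 := by
    rw [hZ, Matrix.transpose_add, Matrix.mul_add, hEE, hED, add_zero]
  have hZE : Z * W * Eᵀ = 1 := by
    rw [hZ, Matrix.add_mul, Matrix.add_mul, hEE, hDE, add_zero]
  have hZZ : Z * W * Zᵀ = 1 + Δ := by
    conv_lhs => rw [hZ]
    rw [Matrix.add_mul, Matrix.add_mul, Matrix.transpose_add, Matrix.mul_add, Matrix.mul_add,
      hEE, hED, hDE, hDel2, add_zero, zero_add]
  rw [← hZ] at hX
  generalize hSdef : 1 + Δ = S at *
  have hgram : X₀ * W * X₀ᵀ = A * S * Aᵀ := by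
    rw [hX, Matrix.transpose_mul, ← hZZ]
    simp only [Matrix.mul_assoc]
  have hP' : P = W * Zᵀ * S⁻¹ * Z := by
    rw [hP, hgram, hX, Matrix.transpose_mul, Matrix.mul_inv_rev, Matrix.mul_inv_rev]
    simp only [Matrix.mul_assoc]
    rw [Matrix.mul_nonsing_inv_cancel_left _ _ hAt, Matrix.nonsing_inv_mul_cancel_left _ _ hA]
  have hEP : E * (1 - P) = E - S⁻¹ * Z := by
    rw [Matrix.mul_sub, Matrix.mul_one, hP', ← Matrix.mul_assoc, ← Matrix.mul_assoc,
      ← Matrix.mul_assoc, hEZ, Matrix.one_mul]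
  have key : (E - S⁻¹ * Z) * W * (E - S⁻¹ * Z)ᵀ = Δ * S⁻¹ := by
    have h1 : S⁻¹ * Z * W * Eᵀ = S⁻¹ := by
      rw [Matrix.mul_assoc, Matrix.mul_assoc, ← Matrix.mul_assoc Z, hZE, Matrix.mul_one]
    have h2 : E * W * (S⁻¹ * Z)ᵀ = S⁻¹ := by
      rw [Matrix.transpose_mul, hSt, ← Matrix.mul_assoc, hEZ, Matrix.one_mul]
    have h3 : S⁻¹ * Z * W * (S⁻¹ * Z)ᵀ = S⁻¹ := by
      rw [Matrix.transpose_mul, hSt, ← Matrix.mul_assoc, Matrix.mul_assoc S⁻¹,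
        Matrix.mul_assoc S⁻¹, hZZ, Matrix.nonsing_inv_mul _ hS, Matrix.one_mul]
    have h4 : Δ = S - 1 := by rw [← hSdef]; abel
    rw [Matrix.transpose_sub, Matrix.sub_mul, Matrix.sub_mul, Matrix.mul_sub, Matrix.mul_sub,
      hEE, h1, h2, h3, h4, Matrix.sub_mul, Matrix.mul_nonsing_inv _ hS, Matrix.one_mul]
    abel
  rw [Matrix.mul_assoc Y E, hEP, Matrix.transpose_mul, Matrix.mul_assoc Y Δ, ← key]
  simp only [Matrix.mul_assoc]
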